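/- arXiv:2306.08114 — 9 statements merged into one kernel-verified Lean document; each statement's English description precedes it below -/
import Mathlib

section
/- Let a ≤ b < 0 be real numbers and n ≥ 2 an even natural number. Then the n-th interval power P_n(a,b) equals the closed interval [b^n, a^n]. -/
/-!
Since `n` is even, negating all factors does not change a product of `n` elements of `[a, b]`, so
it is a product of `n` elements of `[-b, -a]`; these are positive, and monotonicity of products
(`Finset.prod_le_prod`) bounds it between `b ^ n` and `a ^ n`. Conversely, `t ↦ t ^ n` is continuous
on `[a, b]` and takes the values `a ^ n` and `b ^ n` at the endpoints, so the intermediate value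
theorem (`intermediate_value_Icc'`) shows that products of `n` equal factors already fill
`[b ^ n, a ^ n]`.
-/

/-- The n-th interval power P_n(a,b): the set of all products of n elements of [a,b]. -/
def intervalPow (a b : ℝ) (n : ℕ) : Set ℝ :=
  {p : ℝ | ∃ x : Fin n → ℝ, (∀ i, x i ∈ Set.Icc a b) ∧ ∏ i, x i = p}

/-- for a ≤ b < 0 and n ≥ 2 even, P_n(a,b) = [bⁿ, aⁿ]. -/
theorem intervalPow_neg_even (a b : ℝ) (hab : a ≤ b) (hb : b < 0)
    (n : ℕ) (hn : 2 ≤ n) (hev : Even n) :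
    intervalPow a b n = Set.Icc (b ^ n) (a ^ n) := by
  have hprod : ∀ m : ℕ, ∀ c : ℝ, c ^ m = ∏ _i : Fin m, c := by simp
  apply Set.Subset.antisymm
  · -- Evenness makes negating every factor harmless, and the negated factors lie in `[-b, -a]`,
    -- where products of nonnegative numbers are monotone.
    rintro p ⟨x, hx, rfl⟩
    have hneg : ∏ i, x i = ∏ i, (-x i) := by
      simp [Finset.prod_neg, hev.neg_one_pow]
    rw [hneg, ← hev.neg_pow b, ← hev.neg_pow a, hprod n (-b), hprod n (-a)]
    constructor
    · exact Finset.prod_le_prod (fun i _ => by linarith)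
        (fun i _ => by linarith [(hx i).2])
    · exact Finset.prod_le_prod (fun i _ => by linarith [(hx i).2])
        (fun i _ => by linarith [(hx i).1])
  · -- By the intermediate value theorem every point of `[b ^ n, a ^ n]` is `t ^ n` with
    -- `t ∈ [a, b]`, so a product of equal factors suffices.
    intro p hp
    obtain ⟨t, ht, rfl⟩ := intermediate_value_Icc' hab
      (continuous_pow n : Continuous fun t : ℝ => t ^ n).continuousOn hp
    exact ⟨fun _ => t, fun _ => ht, (hprod n t).symm⟩
end

section
/- Let a ≤ b < 0 be real numbers and n ≥ 1 an odd natural number. Then the n-th interval power P_n(a,b) equals the closed interval [a^n, b^n]. -/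
/-- for a ≤ b < 0 and n ≥ 1 odd, P_n(a,b) = [aⁿ, bⁿ]. -/
theorem intervalPow_neg_odd (a b : ℝ) (hab : a ≤ b) (hb : b < 0)
    (n : ℕ) (hn : 1 ≤ n) (hodd : Odd n) :
    intervalPow a b n = Set.Icc (a ^ n) (b ^ n) := by
  apply Set.Subset.antisymm
  · rintro p ⟨x, hx, rfl⟩
    -- Negating every factor makes them all positive; `n` odd turns this into one overall sign.
    have hneg : ∏ i, -x i = -∏ i, x i := by
      rw [Finset.prod_neg, Finset.card_univ, Fintype.card_fin, hodd.neg_one_pow, neg_one_mul]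
    have h1 : ∏ _i : Fin n, -b ≤ ∏ i, -x i :=
      Finset.prod_le_prod (fun _ _ => by linarith) (fun i _ => by linarith [(hx i).2])
    have h2 : ∏ i, -x i ≤ ∏ _i : Fin n, -a :=
      Finset.prod_le_prod (fun i _ => by linarith [(hx i).2]) (fun i _ => by linarith [(hx i).1])
    rw [hneg, Fin.prod_const, hodd.neg_pow] at h1 h2
    exact ⟨by linarith, by linarith⟩
  · intro p hp
    -- By the intermediate value theorem `p = c ^ n` with `c ∈ [a, b]`: a constant tuple suffices.
    obtain ⟨c, hc, rfl⟩ := intermediate_value_Icc hab (continuous_pow n).continuousOn hp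
    exact ⟨fun _ => c, fun _ => hc, Fin.prod_const n c⟩
end

section
/- Let a < 0 < b be real numbers and n ≥ 2 an even natural number. Then the n-th interval power P_n(a,b) equals the closed interval [ min{a^(n-1)·b, a·b^(n-1)}, (max{|a|,|b|})^n ]. -/
theorem intervalPow_ordConnected (a b : ℝ) (n : ℕ) : (intervalPow a b n).OrdConnected := by
  have h : intervalPow a b n =
      (fun x : Fin n → ℝ => ∏ i, x i) '' Set.univ.pi (fun _ => Set.Icc a b) := by
    ext p
    simp only [intervalPow, Set.mem_ofPred_eq, Set.mem_image, Set.mem_univ_pi]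
  rw [h]
  refine IsPreconnected.ordConnected ?_
  refine (isPreconnected_univ_pi fun _ => isPreconnected_Icc).image _ ?_
  fun_prop

theorem const_pow_mem_intervalPow {a b c : ℝ} (hc : c ∈ Set.Icc a b) (n : ℕ) :
    c ^ n ∈ intervalPow a b n :=
  ⟨fun _ => c, fun _ => hc, by simp⟩

theorem mul_pow_mem_intervalPow {a b c d : ℝ} (hc : c ∈ Set.Icc a b) (hd : d ∈ Set.Icc a b)
    (m : ℕ) : c * d ^ m ∈ intervalPow a b (m + 1) := by
  refine ⟨Fin.cons c fun _ => d, fun i => ?_, by simp [Fin.prod_univ_succ]⟩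
  refine Fin.cases ?_ (fun j => ?_) i
  · simpa using hc
  · simpa using hd

theorem prod_nonneg_of_even_of_nonpos {n : ℕ} (hev : Even n) {x : Fin n → ℝ}
    (h : ∀ i, x i ≤ 0) : 0 ≤ ∏ i, x i := by
  have h1 : ∏ i, x i = ∏ i, -x i := by
    simp [Finset.prod_neg, hev.neg_one_pow]
  rw [h1]
  exact Finset.prod_nonneg fun i _ => neg_nonneg.2 (h i)

theorem mul_mul_pow_le_prod {a b : ℝ} (ha : a < 0) (hb : 0 < b) {m : ℕ} (hev : Even m)
    {x : Fin (m + 2) → ℝ} (hx : ∀ i, x i ∈ Set.Icc a b) :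
    a * b * (max |a| |b|) ^ m ≤ ∏ i, x i := by
  have hM : 0 ≤ (max |a| |b|) ^ m := by positivity
  rcases le_or_gt 0 (∏ i, x i) with hp | hp
  · exact (mul_nonpos_of_nonpos_of_nonneg (mul_neg_of_neg_of_pos ha hb).le hM).trans hp
  obtain ⟨i, hi⟩ : ∃ i, x i < 0 := by
    by_contra! h
    exact hp.not_ge (Finset.prod_nonneg fun i _ => h i)
  obtain ⟨j, hj⟩ : ∃ j, 0 < x j := by
    by_contra! h
    exact hp.not_ge (prod_nonneg_of_even_of_nonpos (hev.add even_two) h)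
  have hji : j ≠ i := by
    rintro rfl
    exact lt_asymm hi hj
  have hjm : j ∈ Finset.univ.erase i := Finset.mem_erase.2 ⟨hji, Finset.mem_univ j⟩
  have hcard : ((Finset.univ.erase i).erase j).card = m := by
    rw [Finset.card_erase_of_mem hjm, Finset.card_erase_of_mem (Finset.mem_univ i)]
    simp
  have hrest : ∏ k ∈ (Finset.univ.erase i).erase j, |x k| ≤ (max |a| |b|) ^ m := by
    calc ∏ k ∈ (Finset.univ.erase i).erase j, |x k|
        ≤ ∏ k ∈ (Finset.univ.erase i).erase j, max |a| |b| :=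
          Finset.prod_le_prod (fun _ _ => abs_nonneg _)
            fun k _ => abs_le_max_abs_abs (hx k).1 (hx k).2
      _ = (max |a| |b|) ^ m := by rw [Finset.prod_const, hcard]
  have hai : |x i| ≤ -a := by
    rw [abs_of_neg hi]
    exact neg_le_neg (hx i).1
  have hbj : |x j| ≤ b := by
    rw [abs_of_pos hj]
    exact (hx j).2
  have habs : |∏ k, x k| ≤ -a * (b * (max |a| |b|) ^ m) := by
    rw [Finset.abs_prod, ← Finset.mul_prod_erase _ _ (Finset.mem_univ i),
      ← Finset.mul_prod_erase _ _ hjm]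
    have : 0 ≤ -a := by linarith
    gcongr
  linarith [neg_abs_le (∏ k, x k)]

/-- The two candidates are `a * b * a ^ m` and `a * b * b ^ m`; since `a * b < 0` and `m` is even,
the smaller one comes from the endpoint of larger absolute value. -/
theorem min_eq_mul_mul_max_pow {a b : ℝ} (ha : a < 0) (hb : 0 < b) {m : ℕ} (hev : Even m) :
    min (a ^ (m + 1) * b) (a * b ^ (m + 1)) = a * b * (max |a| |b|) ^ m := by
  have hab : a * b ≤ 0 := (mul_neg_of_neg_of_pos ha hb).le
  have h1 : a ^ (m + 1) * b = a * b * |a| ^ m := by rw [hev.pow_abs]; ring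
  have h2 : a * b ^ (m + 1) = a * b * |b| ^ m := by rw [hev.pow_abs]; ring
  rw [h1, h2]
  rcases le_total |a| |b| with h | h
  · rw [max_eq_right h, min_eq_right]
    exact mul_le_mul_of_nonpos_left (by gcongr) hab
  · rw [max_eq_left h, min_eq_left]
    exact mul_le_mul_of_nonpos_left (by gcongr) hab

/-- for a < 0 < b and n ≥ 2 even,
P_n(a,b) = [min{aⁿ⁻¹·b, a·bⁿ⁻¹}, (max{|a|,|b|})ⁿ]. -/
theorem intervalPow_mixed_even (a b : ℝ) (ha : a < 0) (hb : 0 < b)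
    (n : ℕ) (hn : 2 ≤ n) (hev : Even n) :
    intervalPow a b n =
      Set.Icc (min (a ^ (n - 1) * b) (a * b ^ (n - 1))) ((max |a| |b|) ^ n) := by
  obtain ⟨m, rfl⟩ : ∃ m, n = m + 2 := ⟨n - 2, by omega⟩
  have hm : Even m := by
    rcases hev with ⟨k, hk⟩
    exact ⟨k - 1, by omega⟩
  have haI : a ∈ Set.Icc a b := ⟨le_rfl, (ha.trans hb).le⟩
  have hbI : b ∈ Set.Icc a b := ⟨(ha.trans hb).le, le_rfl⟩
  rw [show m + 2 - 1 = m + 1 by omega]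
  apply Set.Subset.antisymm
  · rintro _ ⟨x, hx, rfl⟩
    refine ⟨?_, ?_⟩
    · rw [min_eq_mul_mul_max_pow ha hb hm]
      exact mul_mul_pow_le_prod ha hb hm hx
    · refine (le_abs_self _).trans ?_
      rw [Finset.abs_prod]
      calc ∏ k, |x k| ≤ ∏ _k : Fin (m + 2), max |a| |b| :=
            Finset.prod_le_prod (fun _ _ => abs_nonneg _)
              fun k _ => abs_le_max_abs_abs (hx k).1 (hx k).2
        _ = (max |a| |b|) ^ (m + 2) := by simp
  · refine (intervalPow_ordConnected a b (m + 2)).out ?_ ?_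
    · rcases min_choice (a ^ (m + 1) * b) (a * b ^ (m + 1)) with h | h <;> rw [h]
      · rw [mul_comm]
        exact mul_pow_mem_intervalPow hbI haI (m + 1)
      · exact mul_pow_mem_intervalPow haI hbI (m + 1)
    · rcases max_choice |a| |b| with h | h <;> rw [h, hev.pow_abs]
      · exact const_pow_mem_intervalPow haI _
      · exact const_pow_mem_intervalPow hbI _
end

section
/- Let a < 0 < b be real numbers and n ≥ 1 an odd natural number. Then the n-th interval power P_n(a,b) equals the closed interval [ min{a^n, a·b^(n-1)}, max{a^(n-1)·b, b^n} ]. -/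
theorem prod_mem_Icc_of_neg_le {a b : ℝ} (ha : a < 0) (hb : 0 < b) (hab : -a ≤ b) (m : ℕ)
    (x : Fin (m + 1) → ℝ) (hx : ∀ i, x i ∈ Set.Icc a b) :
    ∏ i, x i ∈ Set.Icc (a * b ^ m) (b ^ (m + 1)) := by
  induction m with
  | zero => simpa using hx 0
  | succ m ih =>
    rw [Fin.prod_univ_succ]
    obtain ⟨h1, h2⟩ := ih (fun i => x i.succ) fun i => hx i.succ
    obtain ⟨h3, h4⟩ := hx 0
    have hB : 0 < b ^ m := pow_pos hb m
    simp only [pow_succ] at h2 ⊢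
    generalize ∏ i : Fin (m + 1), x i.succ = p at h1 h2 ⊢
    generalize x 0 = t at h3 h4 ⊢
    generalize b ^ m = B at hB h1 h2 ⊢
    constructor
    · rcases le_total 0 p with hp | hp
      · have e1 := mul_le_mul_of_nonneg_right h3 hp
        have e2 := mul_le_mul_of_nonpos_left h2 ha.le
        linarith
      · have e1 := mul_le_mul_of_nonpos_right h4 hp
        have e2 := mul_le_mul_of_nonneg_left h1 hb.le
        linarith
    · -- both `|t| ≤ b` and `|p| ≤ B * b`, so the two products below are nonnegative
      have e0 : 0 ≤ B * b + p := by
        have := mul_le_mul_of_nonneg_right hab hB.le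
        linarith
      have e1 := mul_nonneg (sub_nonneg.2 h4) e0
      have e2 := mul_nonneg (by linarith : 0 ≤ b + t) (sub_nonneg.2 h2)
      linarith

theorem intervalPow_succ_of_neg_le {a b : ℝ} (ha : a < 0) (hb : 0 < b) (hab : -a ≤ b) (m : ℕ) :
    intervalPow a b (m + 1) = Set.Icc (a * b ^ m) (b ^ (m + 1)) := by
  ext p
  constructor
  · rintro ⟨x, hx, rfl⟩
    exact prod_mem_Icc_of_neg_le ha hb hab m x hx
  · rintro ⟨h1, h2⟩
    have hB : 0 < b ^ m := pow_pos hb m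
    refine ⟨Fin.cons (p / b ^ m) fun _ => b, fun i => ?_, ?_⟩
    · refine Fin.cases ?_ (fun j => ?_) i
      · rw [pow_succ'] at h2
        exact ⟨(le_div_iff₀ hB).2 h1, (div_le_iff₀ hB).2 h2⟩
      · exact ⟨(ha.trans hb).le, le_rfl⟩
    · simp [Fin.prod_univ_succ, hB.ne']

theorem neg_mem_intervalPow {a b : ℝ} {n : ℕ} (hn : Odd n) {p : ℝ}
    (hp : p ∈ intervalPow a b n) : -p ∈ intervalPow (-b) (-a) n := by
  obtain ⟨x, hx, rfl⟩ := hp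
  refine ⟨fun i => -x i, fun i => ⟨neg_le_neg (hx i).2, neg_le_neg (hx i).1⟩, ?_⟩
  simp [Finset.prod_neg, hn.neg_one_pow]

theorem mem_intervalPow_neg {a b : ℝ} {n : ℕ} (hn : Odd n) {p : ℝ} :
    p ∈ intervalPow a b n ↔ -p ∈ intervalPow (-b) (-a) n :=
  ⟨neg_mem_intervalPow hn, fun h => by simpa using neg_mem_intervalPow hn h⟩

/-- for a < 0 < b and n ≥ 1 odd,
P_n(a,b) = [min{aⁿ, a·bⁿ⁻¹}, max{aⁿ⁻¹·b, bⁿ}]. -/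
theorem intervalPow_mixed_odd (a b : ℝ) (ha : a < 0) (hb : 0 < b)
    (n : ℕ) (hn : 1 ≤ n) (hodd : Odd n) :
    intervalPow a b n =
      Set.Icc (min (a ^ n) (a * b ^ (n - 1))) (max (a ^ (n - 1) * b) (b ^ n)) := by
  obtain ⟨m, rfl⟩ : ∃ m, n = m + 1 := ⟨n - 1, by omega⟩
  have hm : Even m := by
    rcases Nat.even_or_odd m with h | h
    · exact h
    · exact absurd hodd (Nat.not_odd_iff_even.2 h.add_one)
  rw [Nat.add_sub_cancel]
  rcases le_total (-a) b with hab | hab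
  · have h : a ^ m ≤ b ^ m := by
      rw [← hm.neg_pow a]
      exact pow_le_pow_left₀ (by linarith) hab m
    rw [intervalPow_succ_of_neg_le ha hb hab, pow_succ' a, pow_succ b,
      min_eq_right (mul_le_mul_of_nonpos_left h ha.le),
      max_eq_right (mul_le_mul_of_nonneg_right h hb.le)]
  · have h : b ^ m ≤ a ^ m := by
      rw [← hm.neg_pow a]
      exact pow_le_pow_left₀ hb.le hab m
    ext p
    rw [mem_intervalPow_neg hodd,
      intervalPow_succ_of_neg_le (by linarith) (by linarith) (by linarith), pow_succ' a,
      pow_succ b, min_eq_left (mul_le_mul_of_nonpos_left h ha.le),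
      max_eq_left (mul_le_mul_of_nonneg_right h hb.le), pow_succ', hm.neg_pow]
    constructor <;> rintro ⟨h1, h2⟩ <;> constructor <;> linarith
end

section
/- Let a ≤ b be real numbers and n ≥ 2 an even natural number. Then the n-th interval power P_n(a,b) equals the closed interval [ min{a^n, a·b^(n-1), a^(n-1)·b, b^n}, max{a^n, b^n} ]. -/
theorem mul_pow_mem_intervalPow_s8 {a b u v : ℝ} {n : ℕ} (hn : 0 < n)
    (hu : u ∈ Set.Icc a b) (hv : v ∈ Set.Icc a b) : u * v ^ (n - 1) ∈ intervalPow a b n := by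
  obtain ⟨m, rfl⟩ : ∃ m, n = m + 1 := ⟨n - 1, by omega⟩
  refine ⟨Fin.cons u fun _ => v, fun i => ?_, ?_⟩
  · refine Fin.cases ?_ (fun j => ?_) i
    · simpa using hu
    · simpa using hv
  · simp [Fin.prod_univ_succ]

/-- Bounds on a product of `n` elements of `[a,b]` when `|a| ≤ b`; the parity of `n` plays no
role here. -/
theorem prod_bounds {a b : ℝ} {n : ℕ} (hab : a ≤ b) (h0 : 0 ≤ a + b) {x : Fin n → ℝ}
    (hx : ∀ i, x i ∈ Set.Icc a b) :
    min (a ^ n) (a * b ^ (n - 1)) ≤ ∏ i, x i ∧ ∏ i, x i ≤ b ^ n := by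
  have hb : 0 ≤ b := by linarith
  have habs : ∀ i, |x i| ≤ b := fun i => abs_le.2 ⟨by linarith [(hx i).1], (hx i).2⟩
  have hprod : ∀ s : Finset (Fin n), |∏ i ∈ s, x i| ≤ b ^ s.card := fun s => by
    rw [Finset.abs_prod, ← Finset.prod_const]
    exact Finset.prod_le_prod (fun i _ => abs_nonneg _) fun i _ => habs i
  refine ⟨?_, by simpa using (le_abs_self _).trans (hprod Finset.univ)⟩
  rcases le_or_gt 0 a with ha | ha
  · refine (min_le_left _ _).trans ?_
    calc a ^ n = ∏ _i : Fin n, a := by simp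
      _ ≤ ∏ i, x i := Finset.prod_le_prod (fun _ _ => ha) fun i _ => (hx i).1
  · refine (min_le_right _ _).trans ?_
    rcases le_or_gt 0 (∏ i, x i) with hp | hp
    · exact (mul_nonpos_of_nonpos_of_nonneg ha.le (pow_nonneg hb _)).trans hp
    · obtain ⟨i, hi⟩ : ∃ i, x i < 0 := by
        by_contra! h
        exact absurd (Finset.prod_nonneg fun i _ => h i) (not_le.2 hp)
      have hr := hprod (Finset.univ.erase i)
      rw [Finset.card_erase_of_mem (Finset.mem_univ i), Finset.card_univ, Fintype.card_fin] at hr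
      have hr' := (le_abs_self _).trans hr
      rw [← Finset.mul_prod_erase Finset.univ x (Finset.mem_univ i)]
      calc a * b ^ (n - 1) ≤ x i * b ^ (n - 1) :=
            mul_le_mul_of_nonneg_right (hx i).1 (pow_nonneg hb _)
        _ ≤ x i * ∏ j ∈ Finset.univ.erase i, x j := mul_le_mul_of_nonpos_left hr' hi.le

/-- for a ≤ b and n ≥ 2 even,
P_n(a,b) = [min{aⁿ, a·bⁿ⁻¹, aⁿ⁻¹·b, bⁿ}, max{aⁿ, bⁿ}]. -/
theorem intervalPow_even (a b : ℝ) (hab : a ≤ b)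
    (n : ℕ) (hn : 2 ≤ n) (hev : Even n) :
    intervalPow a b n =
      Set.Icc (min (min (a ^ n) (a * b ^ (n - 1))) (min (a ^ (n - 1) * b) (b ^ n)))
              (max (a ^ n) (b ^ n)) := by
  have hpow : ∀ t : ℝ, t ^ n = t * t ^ (n - 1) := fun t => by
    rw [← pow_succ', Nat.sub_add_cancel (by omega)]
  have ha : a ∈ Set.Icc a b := ⟨le_rfl, hab⟩
  have hb : b ∈ Set.Icc a b := ⟨hab, le_rfl⟩
  have hmem : ∀ u ∈ Set.Icc a b, ∀ v ∈ Set.Icc a b, u * v ^ (n - 1) ∈ intervalPow a b n :=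
    fun u hu v hv => mul_pow_mem_intervalPow_s8 (by omega) hu hv
  have haa : a ^ n ∈ intervalPow a b n := hpow a ▸ hmem a ha a ha
  have hbb : b ^ n ∈ intervalPow a b n := hpow b ▸ hmem b hb b hb
  have hba : a ^ (n - 1) * b ∈ intervalPow a b n := mul_comm b (a ^ (n - 1)) ▸ hmem b hb a ha
  apply Set.Subset.antisymm
  · rintro _ ⟨x, hx, rfl⟩
    rcases le_total 0 (a + b) with h0 | h0
    · obtain ⟨h1, h2⟩ := prod_bounds hab h0 hx
      exact ⟨(min_le_left _ _).trans h1, h2.trans (le_max_right _ _)⟩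
    · obtain ⟨h1, h2⟩ := prod_bounds (a := -b) (b := -a) (x := fun i => -x i)
        (by linarith) (by linarith) fun i => ⟨neg_le_neg (hx i).2, neg_le_neg (hx i).1⟩
      have hodd : Odd (n - 1) := Nat.Even.sub_odd (by omega) hev odd_one
      have hneg : ∏ i, -x i = ∏ i, x i := by
        simp [Finset.prod_neg, hev.neg_one_pow]
      rw [hneg, hev.neg_pow, hodd.neg_pow, neg_mul_neg, mul_comm b, min_comm] at h1
      rw [hneg, hev.neg_pow] at h2
      exact ⟨(min_le_right _ _).trans h1, h2.trans (le_max_left _ _)⟩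
  · have hmin : ∀ {s t : ℝ}, s ∈ intervalPow a b n → t ∈ intervalPow a b n →
        min s t ∈ intervalPow a b n := fun {s t} hs ht => by
      rcases min_choice s t with h | h <;> rwa [h]
    have hmax : max (a ^ n) (b ^ n) ∈ intervalPow a b n := by
      rcases max_choice (a ^ n) (b ^ n) with h | h <;> rwa [h]
    exact (intervalPow_ordConnected a b n).out
      (hmin (hmin haa (hmem a ha b hb)) (hmin hba hbb)) hmax
end

section
/- Let a ≤ b be real numbers, T > 0, and let u : ℝ → ℝ^m be a measurable function with u_i(τ) ∈ [a,b] for all τ ∈ [0,T] and all i ∈ {1,…,m}. Let η be a word over X = {x₀,x₁,…,x_m} of length n = |η| ≥ 1 whose number of letters different from x₀ is r = |η| − |η|_{x₀} ≥ 1. Then for all t ∈ [0,T], the iterated integral satisfies min{a^r, a·b^(r−1), a^(r−1)·b, b^r} · t^n/n! ≤ E_η[u](t) ≤ max{a^r, a·b^(r−1), a^(r−1)·b, b^r} · t^n/n!. -/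
/-!
Unfolding the recursion, `E_η[u](t)` is the integral over a simplex of volume `t ^ n / n!` of a
product of `r` factors lying in `[a, b]`. Such a product lies between two of the vertex values
`a ^ k * b ^ (r - k)`, since a multilinear function on a box takes its extrema at vertices; in the
recursive form used here (`iterInt_vertex_bounds`) this says that the product of `x ∈ [a, b]` and
`y ∈ [p s, q s]` lies between the extreme values of `a p s`, `a q s`, `b p s`, `b q s`.

It remains to see that only `k ∈ {0, 1, r - 1, r}` matter (`vertex_mem`). Splitting off the parity
of the exponents, `a ^ k * b ^ (r - k) = c * (a²) ^ e * (b²) ^ f` where `c` is one of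
`1, a, b, a * b`. As `a²` and `b²` are nonnegative, `(a²) ^ e * (b²) ^ f` lies between
`(a²) ^ (e + f)` and `(b²) ^ (e + f)`, and multiplying by `c` (of either sign) leaves the vertex
value between two of the four extreme ones.
-/


/-- Iterated integral E_η[u](t) associated to the word η over the alphabet
{x₀, x₁, …, x_m} (encoded as Fin (m+1), with letter 0 playing the role of x₀),
defined by E_∅[u](t) = 1 and E_{x_i η̄}[u](t) = ∫₀ᵗ u(τ)_i · E_{η̄}[u](τ) dτ.
The input u already includes the drift channel, i.e. u τ 0 is meant to be 1. -/
noncomputable def iterInt (m : ℕ) (u : ℝ → Fin (m + 1) → ℝ) :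
    List (Fin (m + 1)) → ℝ → ℝ
  | [], _ => 1
  | i :: η, t => ∫ τ in (0:ℝ)..t, u τ i * iterInt m u η τ

open MeasureTheory

lemma pow_mul_pow_mem_uIcc {A B : ℝ} (hA : 0 ≤ A) (hB : 0 ≤ B) (e f : ℕ) :
    A ^ e * B ^ f ∈ Set.uIcc (A ^ (e + f)) (B ^ (e + f)) := by
  rw [pow_add, pow_add, Set.mem_uIcc]
  rcases le_total A B with h | h
  · left
    constructor <;> gcongr
  · right
    constructor <;> gcongr

lemma mul_mem_uIcc {x p q : ℝ} (c : ℝ) (h : x ∈ Set.uIcc p q) :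
    c * x ∈ Set.uIcc (c * p) (c * q) := by
  rw [Set.mem_uIcc] at h ⊢
  rcases le_total 0 c with hc | hc
  · rcases h with ⟨h₁, h₂⟩ | ⟨h₁, h₂⟩
    · exact Or.inl ⟨mul_le_mul_of_nonneg_left h₁ hc, mul_le_mul_of_nonneg_left h₂ hc⟩
    · exact Or.inr ⟨mul_le_mul_of_nonneg_left h₁ hc, mul_le_mul_of_nonneg_left h₂ hc⟩
  · rcases h with ⟨h₁, h₂⟩ | ⟨h₁, h₂⟩
    · exact Or.inr ⟨mul_le_mul_of_nonpos_left h₂ hc, mul_le_mul_of_nonpos_left h₁ hc⟩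
    · exact Or.inl ⟨mul_le_mul_of_nonpos_left h₂ hc, mul_le_mul_of_nonpos_left h₁ hc⟩

/-- Every vertex value of degree `r ≥ 1` lies between the least and the greatest of the four
extreme ones, whatever the signs of `a` and `b`. -/
lemma vertex_mem (a b : ℝ) {i j r : ℕ} (hij : i + j = r) (hr : 1 ≤ r) :
    a ^ i * b ^ j ∈ Set.Icc
      (min (min (a ^ r) (a * b ^ (r - 1))) (min (a ^ (r - 1) * b) (b ^ r)))
      (max (max (a ^ r) (a * b ^ (r - 1))) (max (a ^ (r - 1) * b) (b ^ r))) := by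
  have key : ∀ p q : ℝ, a ^ i * b ^ j ∈ Set.uIcc p q →
      (p = a ^ r ∨ p = a ^ (r - 1) * b) → (q = b ^ r ∨ q = a * b ^ (r - 1)) →
      a ^ i * b ^ j ∈ Set.Icc
        (min (min (a ^ r) (a * b ^ (r - 1))) (min (a ^ (r - 1) * b) (b ^ r)))
        (max (max (a ^ r) (a * b ^ (r - 1))) (max (a ^ (r - 1) * b) (b ^ r))) := by
    intro p q h hp hq
    refine Set.uIcc_subset_Icc ?_ ?_ h
    · rcases hp with rfl | rfl <;> simp
    · rcases hq with rfl | rfl <;> simp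
  obtain ⟨e, he⟩ := Nat.even_or_odd' i
  obtain ⟨f, hf⟩ := Nat.even_or_odd' j
  have h₀ := pow_mul_pow_mem_uIcc (sq_nonneg a) (sq_nonneg b) e f
  rcases he with rfl | rfl <;> rcases hf with rfl | rfl
  · refine key ((a ^ 2) ^ (e + f)) ((b ^ 2) ^ (e + f)) ?_ (Or.inl ?_) (Or.inl ?_)
    · simpa only [pow_mul] using h₀
    · rw [← pow_mul, ← hij]; ring
    · rw [← pow_mul, ← hij]; ring
  · refine key (b * (a ^ 2) ^ (e + f)) (b * (b ^ 2) ^ (e + f)) ?_ (Or.inr ?_) (Or.inl ?_)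
    · convert mul_mem_uIcc b h₀ using 1; ring
    · rw [show r - 1 = 2 * (e + f) by omega]; ring
    · rw [← hij]; ring
  · refine key (a * (a ^ 2) ^ (e + f)) (a * (b ^ 2) ^ (e + f)) ?_ (Or.inl ?_) (Or.inr ?_)
    · convert mul_mem_uIcc a h₀ using 1; ring
    · rw [← hij]; ring
    · rw [show r - 1 = 2 * (e + f) by omega]; ring
  · refine key (a * b * (a ^ 2) ^ (e + f)) (a * b * (b ^ 2) ^ (e + f)) ?_ (Or.inr ?_) (Or.inr ?_)
    · convert mul_mem_uIcc (a * b) h₀ using 1; ring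
    · rw [show r - 1 = 2 * (e + f) + 1 by omega]; ring
    · rw [show r - 1 = 2 * (e + f) + 1 by omega]; ring

/-- A bilinear form on a box is bounded by its values at the corners. -/
lemma mul_mem_corners {a b p q x y : ℝ} (hx : x ∈ Set.Icc a b) (hy : y ∈ Set.Icc p q) :
    x * y ∈ Set.Icc (min (min (a * p) (a * q)) (min (b * p) (b * q)))
      (max (max (a * p) (a * q)) (max (b * p) (b * q))) := by
  have hx' := mul_mem_uIcc y (Set.Icc_subset_uIcc hx)
  have ha := mul_mem_uIcc a (Set.Icc_subset_uIcc hy)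
  have hb := mul_mem_uIcc b (Set.Icc_subset_uIcc hy)
  rw [mul_comm y x, mul_comm y a, mul_comm y b] at hx'
  refine Set.uIcc_subset_Icc ?_ ?_ hx'
  · exact Set.Icc_subset_Icc (min_le_left _ _) (le_max_left _ _) ha
  · exact Set.Icc_subset_Icc (min_le_right _ _) (le_max_right _ _) hb

section
variable {m : ℕ} {a b T : ℝ} {u : ℝ → Fin (m + 1) → ℝ}

lemma input_integrableOn (hmeas : ∀ i, Measurable fun τ => u τ i) (hu0 : ∀ τ, u τ 0 = 1)
    (hbound : ∀ τ ∈ Set.Icc (0:ℝ) T, ∀ i : Fin (m + 1), i ≠ 0 → u τ i ∈ Set.Icc a b)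
    (i : Fin (m + 1)) : IntegrableOn (fun τ => u τ i) (Set.Icc 0 T) := by
  refine Measure.integrableOn_of_bounded (M := max 1 (max |a| |b|)) (by simp)
    (hmeas i).aestronglyMeasurable ?_
  filter_upwards [ae_restrict_mem measurableSet_Icc] with τ hτ
  by_cases hi : i = 0
  · subst hi
    simp [hu0]
  · obtain ⟨h₁, h₂⟩ := hbound τ hτ i hi
    exact (abs_le_max_abs_abs h₁ h₂).trans (le_max_right _ _)

lemma iterInt_continuousOn (hT : 0 < T)
    (hu : ∀ i, IntegrableOn (fun τ => u τ i) (Set.Icc 0 T)) (η : List (Fin (m + 1))) :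
    ContinuousOn (iterInt m u η) (Set.Icc 0 T) := by
  induction η with
  | nil =>
    have : iterInt m u [] = fun _ => 1 := by funext t; simp [iterInt]
    rw [this]; exact continuousOn_const
  | cons i η ih =>
    have : iterInt m u (i :: η) = fun t => ∫ τ in (0:ℝ)..t, u τ i * iterInt m u η τ := by
      funext t; simp [iterInt]
    rw [this, ← Set.uIcc_of_le hT.le]
    apply intervalIntegral.continuousOn_primitive_interval
    rw [Set.uIcc_of_le hT.le]
    exact (hu i).mul_continuousOn ih isCompact_Icc

lemma integral_pow_div_factorial (c t : ℝ) (n : ℕ) :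
    ∫ τ in (0:ℝ)..t, c * (τ ^ n / (n.factorial : ℝ)) =
      c * (t ^ (n + 1) / ((n + 1).factorial : ℝ)) := by
  rw [intervalIntegral.integral_const_mul, intervalIntegral.integral_div, integral_pow,
    Nat.factorial_succ]
  push_cast
  have : (n.factorial : ℝ) ≠ 0 := by positivity
  have : (n + 1 : ℝ) ≠ 0 := by positivity
  field_simp
  simp

/-- Two vertex values of degree `r = |η| - |η|_{x₀}`, independent of `t`, bound `E_η[u](t)` after
scaling by `t ^ n / n!`. The degree is given by `i + j + |η|_{x₀} = |η|`, which avoids truncated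
subtraction in the induction. -/
lemma iterInt_vertex_bounds (hT : 0 < T)
    (hu : ∀ i, IntegrableOn (fun τ => u τ i) (Set.Icc 0 T)) (hu0 : ∀ τ, u τ 0 = 1)
    (hbound : ∀ τ ∈ Set.Icc (0:ℝ) T, ∀ i : Fin (m + 1), i ≠ 0 → u τ i ∈ Set.Icc a b)
    (η : List (Fin (m + 1))) :
    ∃ p q : ℝ,
      (∃ i j, i + j + η.count 0 = η.length ∧ p = a ^ i * b ^ j) ∧
      (∃ i j, i + j + η.count 0 = η.length ∧ q = a ^ i * b ^ j) ∧
      ∀ t ∈ Set.Icc 0 T, iterInt m u η t ∈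
        Set.Icc (p * (t ^ η.length / (η.length.factorial : ℝ)))
          (q * (t ^ η.length / (η.length.factorial : ℝ))) := by
  induction η with
  | nil => exact ⟨1, 1, ⟨0, 0, by simp⟩, ⟨0, 0, by simp⟩, fun t _ => by simp [iterInt]⟩
  | cons l η ih =>
    obtain ⟨p, q, hp, hq, h⟩ := ih
    -- A pointwise bound on the integrand suffices.
    have step : ∀ p' q' : ℝ, (∀ τ ∈ Set.Icc 0 T, u τ l * iterInt m u η τ ∈
          Set.Icc (p' * (τ ^ η.length / (η.length.factorial : ℝ)))
            (q' * (τ ^ η.length / (η.length.factorial : ℝ)))) →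
        ∀ t ∈ Set.Icc 0 T, iterInt m u (l :: η) t ∈
          Set.Icc (p' * (t ^ (l :: η).length / ((l :: η).length.factorial : ℝ)))
            (q' * (t ^ (l :: η).length / ((l :: η).length.factorial : ℝ))) := by
      intro p' q' h' t ht
      have hsub : Set.Icc 0 t ⊆ Set.Icc 0 T := Set.Icc_subset_Icc_right ht.2
      have hint : IntervalIntegrable (fun τ => u τ l * iterInt m u η τ) volume 0 t := by
        rw [intervalIntegrable_iff_integrableOn_Icc_of_le ht.1]
        exact ((hu l).mul_continuousOn (iterInt_continuousOn hT hu η) isCompact_Icc).mono_set hsub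
      have hpoly : ∀ c : ℝ, IntervalIntegrable
          (fun τ : ℝ => c * (τ ^ η.length / (η.length.factorial : ℝ))) volume 0 t :=
        fun c => Continuous.intervalIntegrable (by fun_prop) _ _
      rw [List.length_cons, ← integral_pow_div_factorial, ← integral_pow_div_factorial, iterInt]
      exact ⟨intervalIntegral.integral_mono_on ht.1 (hpoly p') hint
          fun τ hτ => (h' τ (hsub hτ)).1,
        intervalIntegral.integral_mono_on ht.1 hint (hpoly q')
          fun τ hτ => (h' τ (hsub hτ)).2⟩
    by_cases hl : l = 0
    · subst hl
      obtain ⟨i, j, hij, rfl⟩ := hp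
      obtain ⟨i', j', hij', rfl⟩ := hq
      refine ⟨_, _, ⟨i, j, ?_, rfl⟩, ⟨i', j', ?_, rfl⟩, step _ _ fun τ hτ => ?_⟩
      · simp; omega
      · simp; omega
      · rw [hu0, one_mul]; exact h τ hτ
    · let V : ℝ → Prop := fun x =>
        ∃ i j, i + j + (l :: η).count 0 = (l :: η).length ∧ x = a ^ i * b ^ j
      have hcount : (l :: η).count 0 = η.count 0 := List.count_cons_of_ne hl
      have hVa : ∀ x, (∃ i j, i + j + η.count 0 = η.length ∧ x = a ^ i * b ^ j) → V (a * x) := by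
        rintro x ⟨i, j, hij, rfl⟩
        exact ⟨i + 1, j, by rw [hcount, List.length_cons]; omega, by ring⟩
      have hVb : ∀ x, (∃ i j, i + j + η.count 0 = η.length ∧ x = a ^ i * b ^ j) → V (b * x) := by
        rintro x ⟨i, j, hij, rfl⟩
        exact ⟨i, j + 1, by rw [hcount, List.length_cons]; omega, by ring⟩
      have hmin : ∀ x y, V x → V y → V (min x y) := fun x y hx hy => by
        rcases min_choice x y with h | h <;> rw [h] <;> assumption
      have hmax : ∀ x y, V x → V y → V (max x y) := fun x y hx hy => by
        rcases max_choice x y with h | h <;> rw [h] <;> assumption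
      refine ⟨min (min (a * p) (a * q)) (min (b * p) (b * q)),
        max (max (a * p) (a * q)) (max (b * p) (b * q)),
        hmin _ _ (hmin _ _ (hVa _ hp) (hVa _ hq)) (hmin _ _ (hVb _ hp) (hVb _ hq)),
        hmax _ _ (hmax _ _ (hVa _ hp) (hVa _ hq)) (hmax _ _ (hVb _ hp) (hVb _ hq)),
        step _ _ fun τ hτ => ?_⟩
      have hs : 0 ≤ τ ^ η.length / (η.length.factorial : ℝ) := by
        have := hτ.1
        positivity
      have hc := mul_mem_corners (hbound τ hτ l hl) (h τ hτ)
      simpa only [min_mul_of_nonneg _ _ hs, max_mul_of_nonneg _ _ hs, mul_assoc] using hc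

end

/-- if u_i(τ) ∈ [a,b] on [0,T] for the non-drift channels, u₀ ≡ 1,
η is a word of length n ≥ 1 with r = |η| - |η|_{x₀} ≥ 1 letters different from x₀,
then for all t ∈ [0,T]:
min{aʳ, a·bʳ⁻¹, aʳ⁻¹·b, bʳ}·tⁿ/n! ≤ E_η[u](t) ≤ max{aʳ, a·bʳ⁻¹, aʳ⁻¹·b, bʳ}·tⁿ/n!. -/
theorem iterInt_bounds {m : ℕ} (hm : 1 ≤ m) (a b : ℝ) (hab : a ≤ b)
    (T : ℝ) (hT : 0 < T) (u : ℝ → Fin (m + 1) → ℝ)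
    (hmeas : ∀ i, Measurable fun τ => u τ i)
    (hu0 : ∀ τ, u τ 0 = 1)
    (hbound : ∀ τ ∈ Set.Icc (0:ℝ) T, ∀ i : Fin (m + 1), i ≠ 0 → u τ i ∈ Set.Icc a b)
    (η : List (Fin (m + 1))) (hn : 1 ≤ η.length)
    (hr : 1 ≤ η.length - η.count 0) :
    ∀ t ∈ Set.Icc (0:ℝ) T,
      min (min (a ^ (η.length - η.count 0)) (a * b ^ (η.length - η.count 0 - 1)))
          (min (a ^ (η.length - η.count 0 - 1) * b) (b ^ (η.length - η.count 0)))
          * t ^ η.length / (Nat.factorial η.length : ℝ)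
        ≤ iterInt m u η t ∧
      iterInt m u η t ≤
        max (max (a ^ (η.length - η.count 0)) (a * b ^ (η.length - η.count 0 - 1)))
            (max (a ^ (η.length - η.count 0 - 1) * b) (b ^ (η.length - η.count 0)))
          * t ^ η.length / (Nat.factorial η.length : ℝ) := by
  intro t ht
  obtain ⟨p, q, ⟨i, j, hij, rfl⟩, ⟨i', j', hij', rfl⟩, h⟩ :=
    iterInt_vertex_bounds hT (input_integrableOn hmeas hu0 hbound) hu0 hbound η
  have hs : 0 ≤ t ^ η.length / (η.length.factorial : ℝ) := by
    have := ht.1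
    positivity
  rw [mul_div_assoc, mul_div_assoc]
  exact ⟨(mul_le_mul_of_nonneg_right
      (vertex_mem a b (i := i) (j := j) (by omega) hr).1 hs).trans (h t ht).1,
    (h t ht).2.trans (mul_le_mul_of_nonneg_right
      (vertex_mem a b (i := i') (j := j') (by omega) hr).2 hs)⟩
end

section
/- Let a ≤ b be real numbers and set R = max{|a|,|b|,1}. Let c assign a real coefficient (c,η) to every word η over X = {x₀,…,x_m}, and suppose there exist K, M ≥ 0 such that |(c,η)| ≤ K·M^{|η|}·|η|! for all words η (local convergence bound). For each word η with r = |η| − |η|_{x₀}, define (c̲,η) = min{ (c,η)·p : p ∈ P_r(a,b) } and (c̄,η) = max{ (c,η)·p : p ∈ P_r(a,b) } (with P₀(a,b) = {1}). Then for every measurable u : ℝ → ℝ^m with u_i(τ) ∈ [a,b] for all τ ≥ 0 and all i, and every t with 0 ≤ t < 1/((m+1)·M·R) (any t ≥ 0 if M = 0), the series ∑_η (c,η) E_η[u](t) converges absolutely and ∑_η (c̲,η) t^{|η|}/|η|! ≤ ∑_η (c,η) E_η[u](t) ≤ ∑_η (c̄,η) t^{|η|}/|η|!. -/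
/-- The lower coefficient (c̲,η) = min{ (c,η)·p : p ∈ P_r(a,b) } with
r = |η| - |η|_{x₀}. -/
noncomputable def lowCoef {m : ℕ} (a b : ℝ) (c : List (Fin (m + 1)) → ℝ)
    (η : List (Fin (m + 1))) : ℝ :=
  sInf ((fun p => c η * p) '' intervalPow a b (η.length - η.count 0))

/-- The upper coefficient (c̄,η) = max{ (c,η)·p : p ∈ P_r(a,b) } with
r = |η| - |η|_{x₀}. -/
noncomputable def upCoef {m : ℕ} (a b : ℝ) (c : List (Fin (m + 1)) → ℝ)
    (η : List (Fin (m + 1))) : ℝ :=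
  sSup ((fun p => c η * p) '' intervalPow a b (η.length - η.count 0))

lemma intervalPow_eq_image (a b : ℝ) (n : ℕ) :
    intervalPow a b n =
      (fun x : Fin n → ℝ => ∏ i, x i) '' (Set.univ.pi fun _ => Set.Icc a b) := by
  ext p
  simp only [intervalPow, Set.mem_ofPred_eq, Set.mem_image, Set.mem_univ_pi]

lemma isCompact_intervalPow (a b : ℝ) (n : ℕ) : IsCompact (intervalPow a b n) := by
  rw [intervalPow_eq_image]
  exact (isCompact_univ_pi fun _ => isCompact_Icc).image (by fun_prop)

lemma isPreconnected_intervalPow (a b : ℝ) (n : ℕ) : IsPreconnected (intervalPow a b n) := by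
  rw [intervalPow_eq_image]
  exact (isPreconnected_univ_pi fun _ => isPreconnected_Icc).image _ (by fun_prop)

lemma nonempty_intervalPow {a b : ℝ} (hab : a ≤ b) (n : ℕ) : (intervalPow a b n).Nonempty :=
  ⟨_, fun _ => a, fun _ => ⟨le_rfl, hab⟩, rfl⟩

lemma mul_mem_intervalPow {a b x p : ℝ} {n : ℕ} (hx : x ∈ Set.Icc a b)
    (hp : p ∈ intervalPow a b n) : x * p ∈ intervalPow a b (n + 1) := by
  obtain ⟨y, hy, rfl⟩ := hp
  refine ⟨Fin.cons x y, fun i => ?_, by simp [Fin.prod_univ_succ]⟩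
  refine Fin.cases ?_ (fun j => ?_) i
  · simpa using hx
  · simpa using hy j

lemma abs_le_of_mem_intervalPow {a b p : ℝ} {n : ℕ} (hp : p ∈ intervalPow a b n) :
    |p| ≤ max (max |a| |b|) 1 ^ n := by
  obtain ⟨x, hx, rfl⟩ := hp
  rw [Finset.abs_prod]
  calc ∏ i, |x i| ≤ ∏ _i : Fin n, max (max |a| |b|) 1 :=
        Finset.prod_le_prod (fun i _ => abs_nonneg _)
          fun i _ => (abs_le_max_abs_abs (hx i).1 (hx i).2).trans (le_max_left _ _)
    _ = _ := by simp

/-- There are `k ^ n` words of length `n` over `k` letters, so the sum over all words reduces to a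
geometric series of ratio `k * q`. -/
lemma summable_pow_length (k : ℕ) {q : ℝ} (hq : 0 ≤ q) (hkq : k * q < 1) :
    Summable fun η : List (Fin k) => q ^ η.length := by
  let e : (Σ n, List.Vector (Fin k) n) ≃ List (Fin k) := Equiv.sigmaFiberEquiv List.length
  rw [← e.summable_iff]
  have he : ∀ x, ((fun η : List (Fin k) => q ^ η.length) ∘ e) x = q ^ x.1 := by
    rintro ⟨n, v, hv⟩
    change q ^ v.length = q ^ n
    rw [hv]
  rw [summable_congr he, summable_sigma_of_nonneg (fun _ => by positivity)]
  refine ⟨fun n => Summable.of_finite, ?_⟩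
  refine (summable_geometric_of_lt_one (r := k * q) (by positivity) hkq).congr fun n => ?_
  simp [tsum_fintype, mul_pow]

section Input

variable {m : ℕ} {a b : ℝ} {u : ℝ → Fin (m + 1) → ℝ}

lemma abs_input_le (hu0 : ∀ τ, u τ 0 = 1)
    (hbound : ∀ τ, 0 ≤ τ → ∀ i : Fin (m + 1), i ≠ 0 → u τ i ∈ Set.Icc a b)
    {τ : ℝ} (hτ : 0 ≤ τ) (i : Fin (m + 1)) : |u τ i| ≤ max (max |a| |b|) 1 := by
  by_cases hi : i = 0
  · subst hi
    simp [hu0]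
  · exact (abs_le_max_abs_abs (hbound τ hτ i hi).1 (hbound τ hτ i hi).2).trans (le_max_left _ _)

lemma integrableOn_input_mul (hmeas : ∀ i, Measurable fun τ => u τ i) (hu0 : ∀ τ, u τ 0 = 1)
    (hbound : ∀ τ, 0 ≤ τ → ∀ i : Fin (m + 1), i ≠ 0 → u τ i ∈ Set.Icc a b)
    (i : Fin (m + 1)) {T : ℝ} {f : ℝ → ℝ} (hf : ContinuousOn f (Set.Icc 0 T)) :
    MeasureTheory.IntegrableOn (fun τ => u τ i * f τ) (Set.Icc 0 T) := by
  refine MeasureTheory.Integrable.bdd_mul (c := max (max |a| |b|) 1)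
    (hf.integrableOn_compact isCompact_Icc) (hmeas i).aestronglyMeasurable ?_
  filter_upwards [MeasureTheory.ae_restrict_mem measurableSet_Icc] with τ hτ
  exact abs_input_le hu0 hbound hτ.1 i

lemma continuousOn_iterInt (hmeas : ∀ i, Measurable fun τ => u τ i) (hu0 : ∀ τ, u τ 0 = 1)
    (hbound : ∀ τ, 0 ≤ τ → ∀ i : Fin (m + 1), i ≠ 0 → u τ i ∈ Set.Icc a b)
    {T : ℝ} (η : List (Fin (m + 1))) :
    ContinuousOn (iterInt m u η) (Set.Icc 0 T) := by
  induction η with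
  | nil => exact continuousOn_const
  | cons i η ih =>
    exact intervalIntegral.continuousOn_primitive (integrableOn_input_mul hmeas hu0 hbound i ih)
      |>.congr fun t ht => intervalIntegral.integral_of_le ht.1

lemma intervalIntegrable_input_mul (hmeas : ∀ i, Measurable fun τ => u τ i)
    (hu0 : ∀ τ, u τ 0 = 1)
    (hbound : ∀ τ, 0 ≤ τ → ∀ i : Fin (m + 1), i ≠ 0 → u τ i ∈ Set.Icc a b)
    {t : ℝ} (ht : 0 ≤ t) (i : Fin (m + 1)) (η : List (Fin (m + 1))) :
    IntervalIntegrable (fun τ => u τ i * iterInt m u η τ) MeasureTheory.volume 0 t := by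
  rw [intervalIntegrable_iff_integrableOn_Icc_of_le ht]
  exact integrableOn_input_mul hmeas hu0 hbound i (continuousOn_iterInt hmeas hu0 hbound η)

/-- Mean-value step: if at every time of `[0,t]` the integrand is an element of `P_n(a,b)` times
`τ^k / k!`, then its integral is an element of `P_n(a,b)` times `t^(k+1) / (k+1)!`, because
`P_n(a,b)` is a compact interval. -/
lemma exists_integral_eq (hab : a ≤ b) {n k : ℕ} {t : ℝ} (ht : 0 ≤ t) {f : ℝ → ℝ}
    (hf : IntervalIntegrable f MeasureTheory.volume 0 t)
    (h : ∀ τ, 0 ≤ τ → ∃ p ∈ intervalPow a b n, f τ = p * (τ ^ k / (Nat.factorial k : ℝ))) :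
    ∃ p ∈ intervalPow a b n,
      ∫ τ in (0:ℝ)..t, f τ = p * (t ^ (k + 1) / (Nat.factorial (k + 1) : ℝ)) := by
  have hne := nonempty_intervalPow hab n
  obtain ⟨L, hL, hLle⟩ := (isCompact_intervalPow a b n).exists_isLeast hne
  obtain ⟨U, hU, hUle⟩ := (isCompact_intervalPow a b n).exists_isGreatest hne
  have hint : ∀ C : ℝ, ∫ τ in (0:ℝ)..t, C * (τ ^ k / (Nat.factorial k : ℝ)) =
      C * (t ^ (k + 1) / (Nat.factorial (k + 1) : ℝ)) := by
    intro C
    rw [intervalIntegral.integral_const_mul, intervalIntegral.integral_div, integral_pow,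
      Nat.factorial_succ]
    push_cast
    have : (Nat.factorial k : ℝ) ≠ 0 := by positivity
    field_simp
    simp
  have hI : ∀ C : ℝ, IntervalIntegrable (fun τ : ℝ => C * (τ ^ k / (Nat.factorial k : ℝ)))
      MeasureTheory.volume 0 t := fun C => Continuous.intervalIntegrable (by fun_prop) _ _
  have hlo : L * (t ^ (k + 1) / (Nat.factorial (k + 1) : ℝ)) ≤ ∫ τ in (0:ℝ)..t, f τ := by
    rw [← hint]
    refine intervalIntegral.integral_mono_on ht (hI L) hf fun τ hτ => ?_
    obtain ⟨p, hp, hfp⟩ := h τ hτ.1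
    have hτ0 : 0 ≤ τ := hτ.1
    rw [hfp]
    exact mul_le_mul_of_nonneg_right (hLle hp) (by positivity)
  have hhi : ∫ τ in (0:ℝ)..t, f τ ≤ U * (t ^ (k + 1) / (Nat.factorial (k + 1) : ℝ)) := by
    rw [← hint]
    refine intervalIntegral.integral_mono_on ht hf (hI U) fun τ hτ => ?_
    obtain ⟨p, hp, hfp⟩ := h τ hτ.1
    have hτ0 : 0 ≤ τ := hτ.1
    rw [hfp]
    exact mul_le_mul_of_nonneg_right (hUle hp) (by positivity)
  rcases ht.eq_or_lt with rfl | htpos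
  · exact ⟨L, hL, by simp⟩
  · have hs : 0 < t ^ (k + 1) / (Nat.factorial (k + 1) : ℝ) := by positivity
    refine ⟨(∫ τ in (0:ℝ)..t, f τ) / (t ^ (k + 1) / (Nat.factorial (k + 1) : ℝ)), ?_,
      (div_mul_cancel₀ _ hs.ne').symm⟩
    exact (isPreconnected_intervalPow a b n).Icc_subset hL hU
      ⟨(le_div_iff₀ hs).2 hlo, (div_le_iff₀ hs).2 hhi⟩

/-- Every iterated integral of an admissible input is an element of the interval power `P_r(a,b)`
times `t^|η| / |η|!`, where `r = |η| - |η|_{x₀}`. -/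
lemma exists_iterInt_eq (hab : a ≤ b) (hmeas : ∀ i, Measurable fun τ => u τ i)
    (hu0 : ∀ τ, u τ 0 = 1)
    (hbound : ∀ τ, 0 ≤ τ → ∀ i : Fin (m + 1), i ≠ 0 → u τ i ∈ Set.Icc a b)
    (η : List (Fin (m + 1))) : ∀ t : ℝ, 0 ≤ t →
      ∃ p ∈ intervalPow a b (η.length - η.count 0),
        iterInt m u η t = p * (t ^ η.length / (Nat.factorial η.length : ℝ)) := by
  induction η with
  | nil => exact fun t _ => ⟨1, ⟨fun _ => a, fun _ => ⟨le_rfl, hab⟩, Fin.prod_univ_zero _⟩,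
      by simp [iterInt]⟩
  | cons i η ih =>
    intro t ht
    refine exists_integral_eq hab ht
      (intervalIntegrable_input_mul hmeas hu0 hbound ht i η) fun τ hτ => ?_
    obtain ⟨p, hp, hE⟩ := ih τ hτ
    by_cases hi : i = 0
    · subst hi
      exact ⟨p, by simpa using hp, by rw [hu0, one_mul, hE]⟩
    · refine ⟨u τ i * p, ?_, by rw [hE, mul_assoc]⟩
      have hcount : (i :: η).length - (i :: η).count 0 = η.length - η.count 0 + 1 := by
        rw [List.count_cons_of_ne hi, List.length_cons]
        have := List.count_le_length (a := (0 : Fin (m + 1))) (l := η)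
        omega
      rw [hcount]
      exact mul_mem_intervalPow (hbound τ hτ i hi) hp

end Input

lemma isCompact_image_intervalPow (a b x : ℝ) (n : ℕ) :
    IsCompact ((fun p => x * p) '' intervalPow a b n) :=
  (isCompact_intervalPow a b n).image (by fun_prop)

/-- under the local convergence bound |(c,η)| ≤ K·M^{|η|}·|η|!,
for every input with values in [a,b] and every t with 0 ≤ t < 1/((m+1)·M·R)
(any t ≥ 0 if M = 0), where R = max{|a|,|b|,1}, the Chen-Fliess series
∑_η (c,η)·E_η[u](t) converges absolutely and
∑_η (c̲,η)·t^{|η|}/|η|! ≤ ∑_η (c,η)·E_η[u](t) ≤ ∑_η (c̄,η)·t^{|η|}/|η|!. -/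
theorem chenFliess_LC_interval_bounds {m : ℕ} (hm : 1 ≤ m) (a b : ℝ) (hab : a ≤ b)
    (c : List (Fin (m + 1)) → ℝ) (K M : ℝ) (hK : 0 ≤ K) (hM : 0 ≤ M)
    (hc : ∀ η : List (Fin (m + 1)),
      |c η| ≤ K * M ^ η.length * (Nat.factorial η.length : ℝ))
    (u : ℝ → Fin (m + 1) → ℝ)
    (hmeas : ∀ i, Measurable fun τ => u τ i)
    (hu0 : ∀ τ, u τ 0 = 1)
    (hbound : ∀ τ, 0 ≤ τ → ∀ i : Fin (m + 1), i ≠ 0 → u τ i ∈ Set.Icc a b)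
    (t : ℝ) (ht : 0 ≤ t)
    (htlt : M = 0 ∨ t < 1 / ((m + 1 : ℝ) * M * max (max |a| |b|) 1)) :
    (Summable fun η : List (Fin (m + 1)) => |c η * iterInt m u η t|) ∧
    (∑' η : List (Fin (m + 1)),
        lowCoef a b c η * t ^ η.length / (Nat.factorial η.length : ℝ))
      ≤ ∑' η : List (Fin (m + 1)), c η * iterInt m u η t ∧
    (∑' η : List (Fin (m + 1)), c η * iterInt m u η t)
      ≤ ∑' η : List (Fin (m + 1)),
          upCoef a b c η * t ^ η.length / (Nat.factorial η.length : ℝ) := by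
  set R : ℝ := max (max |a| |b|) 1 with hR
  have hR1 : 1 ≤ R := le_max_right _ _
  have hR0 : 0 ≤ R := zero_le_one.trans hR1
  have hsum : Summable fun η : List (Fin (m + 1)) => K * (M * R * t) ^ η.length := by
    refine (summable_pow_length (m + 1) (by positivity) ?_).mul_left K
    rcases htlt with rfl | h
    · simp
    · rcases hM.eq_or_lt with rfl | hMpos
      · simp
      · rw [lt_div_iff₀ (by positivity)] at h
        push_cast
        linarith
  have hdom : ∀ (η : List (Fin (m + 1))) (p : ℝ), p ∈ intervalPow a b (η.length - η.count 0) →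
      |c η * p * t ^ η.length / (Nat.factorial η.length : ℝ)| ≤ K * (M * R * t) ^ η.length := by
    intro η p hp
    have hp' : |p| ≤ R ^ η.length :=
      (abs_le_of_mem_intervalPow hp).trans (pow_le_pow_right₀ hR1 (Nat.sub_le _ _))
    have hfac : (0 : ℝ) < Nat.factorial η.length := by positivity
    rw [abs_div, abs_mul, abs_mul, abs_of_pos hfac, abs_of_nonneg (pow_nonneg ht _),
      div_le_iff₀ hfac]
    calc |c η| * |p| * t ^ η.length
        ≤ (K * M ^ η.length * (Nat.factorial η.length : ℝ)) * R ^ η.length * t ^ η.length := by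
          gcongr
          exact hc η
      _ = _ := by rw [mul_pow, mul_pow]; ring
  have hE : ∀ η : List (Fin (m + 1)), ∃ p ∈ intervalPow a b (η.length - η.count 0),
      c η * iterInt m u η t = c η * p * t ^ η.length / (Nat.factorial η.length : ℝ) := by
    intro η
    obtain ⟨p, hp, h⟩ := exists_iterInt_eq hab hmeas hu0 hbound η t ht
    exact ⟨p, hp, by rw [h]; ring⟩
  have hS : Summable fun η : List (Fin (m + 1)) => |c η * iterInt m u η t| := by
    refine Summable.of_nonneg_of_le (fun _ => abs_nonneg _) (fun η => ?_) hsum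
    obtain ⟨p, hp, h⟩ := hE η
    rw [h]
    exact hdom η p hp
  -- By compactness the infimum and supremum are attained, so the dominating bound applies to them.
  have hSlow : Summable fun η : List (Fin (m + 1)) =>
      lowCoef a b c η * t ^ η.length / (Nat.factorial η.length : ℝ) := by
    refine Summable.of_norm_bounded hsum fun η => ?_
    obtain ⟨p, hp, h⟩ := (isCompact_image_intervalPow a b (c η) _).sInf_mem
      ((nonempty_intervalPow hab (η.length - η.count 0)).image _)
    rw [lowCoef, ← h]
    exact hdom η p hp
  have hSup : Summable fun η : List (Fin (m + 1)) =>
      upCoef a b c η * t ^ η.length / (Nat.factorial η.length : ℝ) := by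
    refine Summable.of_norm_bounded hsum fun η => ?_
    obtain ⟨p, hp, h⟩ := (isCompact_image_intervalPow a b (c η) _).sSup_mem
      ((nonempty_intervalPow hab (η.length - η.count 0)).image _)
    rw [upCoef, ← h]
    exact hdom η p hp
  refine ⟨hS, hSlow.tsum_le_tsum (fun η => ?_) hS.of_abs,
    hS.of_abs.tsum_le_tsum (fun η => ?_) hSup⟩
  · obtain ⟨p, hp, h⟩ := hE η
    rw [h]
    gcongr
    exact csInf_le (isCompact_image_intervalPow a b (c η) _).bddBelow ⟨p, hp, rfl⟩
  · obtain ⟨p, hp, h⟩ := hE η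
    rw [h]
    gcongr
    exact le_csSup (isCompact_image_intervalPow a b (c η) _).bddAbove ⟨p, hp, rfl⟩
end

section
/- Let a < 0 < b be real numbers with |a| ≤ |b|, n ≥ 1 a natural number, and λ a real number. Then P_n(a,b) = [a·b^(n−1), b^n], and consequently: if λ > 0 then min{ λ·p : p ∈ P_n(a,b) } = λ·a·b^(n−1) and max{ λ·p : p ∈ P_n(a,b) } = λ·b^n; if λ < 0 then min{ λ·p : p ∈ P_n(a,b) } = λ·b^n and max{ λ·p : p ∈ P_n(a,b) } = λ·a·b^(n−1). -/
theorem prod_mem_Icc_of_mixed (a b : ℝ) (ha : a < 0) (hb : 0 < b) (hab : -b ≤ a) (m : ℕ)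
    (x : Fin (m + 1) → ℝ) (hx : ∀ i, x i ∈ Set.Icc a b) :
    ∏ i, x i ∈ Set.Icc (a * b ^ m) (b ^ (m + 1)) := by
  induction m with
  | zero => simpa using hx 0
  | succ m ih =>
    rw [Fin.prod_univ_succ]
    have hq := ih (fun i => x i.succ) fun i => hx i.succ
    obtain ⟨hx1, hx2⟩ := hx 0
    generalize ∏ i : Fin (m + 1), x i.succ = q at hq ⊢
    generalize x 0 = y at hx1 hx2 ⊢
    obtain ⟨hq1, hq2⟩ := hq
    have hbm : 0 < b ^ m := pow_pos hb m
    rw [pow_succ] at hq2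
    rw [pow_succ b (m + 1), pow_succ b m]
    constructor
    · rcases le_total 0 y with hy | hy
      · have h1 : y * (a * b ^ m) ≤ y * q := mul_le_mul_of_nonneg_left hq1 hy
        have h2 : b * (a * b ^ m) ≤ y * (a * b ^ m) :=
          mul_le_mul_of_nonpos_right hx2 (mul_neg_of_neg_of_pos ha hbm).le
        linarith
      · rcases le_total 0 q with h | h
        · have h1 : a * q ≤ y * q := mul_le_mul_of_nonneg_right hx1 h
          have h2 : a * (b ^ m * b) ≤ a * q := mul_le_mul_of_nonpos_left hq2 ha.le
          linarith
        · have h1 : 0 ≤ y * q := mul_nonneg_of_nonpos_of_nonpos hy h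
          have h2 : a * (b ^ m * b) < 0 := mul_neg_of_neg_of_pos ha (mul_pos hbm hb)
          linarith
    · have hy : |y| ≤ b := abs_le.2 ⟨by linarith, hx2⟩
      have hq : |q| ≤ b ^ m * b := by
        have h := mul_le_mul_of_nonneg_right hab hbm.le
        exact abs_le.2 ⟨by linarith, hq2⟩
      calc y * q ≤ |y * q| := le_abs_self _
        _ = |q| * |y| := by rw [abs_mul, mul_comm]
        _ ≤ b ^ m * b * b := mul_le_mul hq hy (abs_nonneg _) (by positivity)

theorem intervalPow_succ_eq_of_mixed (a b : ℝ) (ha : a < 0) (hb : 0 < b) (hab : -b ≤ a) (m : ℕ) :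
    intervalPow a b (m + 1) = Set.Icc (a * b ^ m) (b ^ (m + 1)) := by
  ext p
  constructor
  · rintro ⟨x, hx, rfl⟩
    exact prod_mem_Icc_of_mixed a b ha hb hab m x hx
  · rintro ⟨h1, h2⟩
    have hbm : 0 < b ^ m := pow_pos hb m
    refine ⟨Fin.cons (p / b ^ m) fun _ => b, fun i => ?_, ?_⟩
    · refine Fin.cases ?_ (fun j => ?_) i
      · rw [Fin.cons_zero]
        exact ⟨(le_div_iff₀ hbm).2 h1, (div_le_iff₀ hbm).2 (by rwa [← pow_succ'])⟩
      · rw [Fin.cons_succ]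
        exact ⟨by linarith, le_rfl⟩
    · rw [Fin.prod_univ_succ]
      simp [hbm.ne']

/-- for a < 0 < b with |a| ≤ |b| and n ≥ 1:
P_n(a,b) = [a·bⁿ⁻¹, bⁿ], and consequently:
if λ > 0 then min{λ·p} = λ·a·bⁿ⁻¹ and max{λ·p} = λ·bⁿ;
if λ < 0 then min{λ·p} = λ·bⁿ and max{λ·p} = λ·a·bⁿ⁻¹. -/
theorem scaled_intervalPow_mixed_b (a b : ℝ) (ha : a < 0) (hb : 0 < b)
    (habs : |a| ≤ |b|) (n : ℕ) (hn : 1 ≤ n) (lam : ℝ) :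
    intervalPow a b n = Set.Icc (a * b ^ (n - 1)) (b ^ n) ∧
    (lam > 0 →
      sInf ((fun p => lam * p) '' intervalPow a b n) = lam * (a * b ^ (n - 1)) ∧
      sSup ((fun p => lam * p) '' intervalPow a b n) = lam * b ^ n) ∧
    (lam < 0 →
      sInf ((fun p => lam * p) '' intervalPow a b n) = lam * b ^ n ∧
      sSup ((fun p => lam * p) '' intervalPow a b n) = lam * (a * b ^ (n - 1))) := by
  obtain ⟨m, rfl⟩ : ∃ m, n = m + 1 := ⟨n - 1, by omega⟩
  have hab : -b ≤ a := by
    rw [abs_of_neg ha, abs_of_pos hb] at habs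
    linarith
  have key := intervalPow_succ_eq_of_mixed a b ha hb hab m
  rw [Nat.add_sub_cancel, key]
  have hle : a * b ^ m ≤ b ^ (m + 1) :=
    (mul_neg_of_neg_of_pos ha (pow_pos hb m)).le.trans (pow_pos hb _).le
  have hl := isLeast_Icc hle
  have hg := isGreatest_Icc hle
  refine ⟨rfl, fun h => ?_, fun h => ?_⟩
  · have hm : Monotone fun p : ℝ => lam * p := monotone_mul_left_of_nonneg h.le
    exact ⟨(hm.map_isLeast hl).csInf_eq, (hm.map_isGreatest hg).csSup_eq⟩
  · have hm : Antitone fun p : ℝ => lam * p := antitone_mul_left h.le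
    exact ⟨(hm.map_isGreatest hg).csInf_eq, (hm.map_isLeast hl).csSup_eq⟩
end

section
/- Let a < 0 < b be real numbers with |b| ≤ |a|, n ≥ 1 a natural number, and λ a real number. If (λ > 0 and n is even) or (λ < 0 and n is odd), then min{ λ·p : p ∈ P_n(a,b) } = λ·a^(n−1)·b and max{ λ·p : p ∈ P_n(a,b) } = λ·a^n. If (λ > 0 and n is odd) or (λ < 0 and n is even), then min{ λ·p : p ∈ P_n(a,b) } = λ·a^n and max{ λ·p : p ∈ P_n(a,b) } = λ·a^(n−1)·b. -/
lemma mul_mem_Icc_one {c x y : ℝ} (hc : -1 ≤ c) (hc0 : c < 0)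
    (hx : x ∈ Set.Icc c 1) (hy : y ∈ Set.Icc c 1) : x * y ∈ Set.Icc c 1 := by
  obtain ⟨hx1, hx2⟩ := hx
  obtain ⟨hy1, hy2⟩ := hy
  constructor
  · rcases le_total 0 y with h | h
    · nlinarith
    · nlinarith
  · have hxa : |x| ≤ 1 := abs_le.2 ⟨hc.trans hx1, hx2⟩
    have hya : |y| ≤ 1 := abs_le.2 ⟨hc.trans hy1, hy2⟩
    calc x * y ≤ |x * y| := le_abs_self _
      _ = |x| * |y| := abs_mul x y
      _ ≤ 1 := mul_le_one₀ hxa (abs_nonneg y) hya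

lemma exists_eq_pow_mul_of_mem_intervalPow {a b : ℝ} (ha : a < 0) (hb : 0 < b)
    (habs : |b| ≤ |a|) {n : ℕ} {p : ℝ} (hp : p ∈ intervalPow a b n) :
    ∃ q ∈ Set.Icc (b / a) 1, p = a ^ n * q := by
  obtain ⟨x, hx, rfl⟩ := hp
  rw [abs_of_pos hb, abs_of_neg ha] at habs
  have hc : -1 ≤ b / a := by rw [le_div_iff_of_neg ha]; linarith
  have hc0 : b / a < 0 := div_neg_of_pos_of_neg hb ha
  refine ⟨∏ i, x i / a, ?_, ?_⟩
  · refine Finset.prod_induction _ (· ∈ Set.Icc (b / a) 1)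
      (fun _ _ => mul_mem_Icc_one hc hc0) ⟨by linarith, le_rfl⟩ fun i _ => ⟨?_, ?_⟩
    · exact div_le_div_of_nonpos_of_le ha.le (hx i).2
    · rw [div_le_one_of_neg ha]
      exact (hx i).1
  · rw [Finset.prod_div_distrib, Finset.prod_const, Finset.card_univ, Fintype.card_fin,
      mul_div_cancel₀ _ (pow_ne_zero n ha.ne)]

lemma pow_mem_intervalPow {a b : ℝ} (hab : a ≤ b) (n : ℕ) : a ^ n ∈ intervalPow a b n :=
  ⟨fun _ => a, fun _ => ⟨le_rfl, hab⟩, by simp⟩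

lemma pow_pred_mul_mem_intervalPow {a b : ℝ} (hab : a ≤ b) {n : ℕ} (hn : 1 ≤ n) :
    a ^ (n - 1) * b ∈ intervalPow a b n := by
  obtain ⟨m, rfl⟩ := Nat.exists_eq_add_of_le' hn
  refine ⟨Fin.cons b fun _ => a, Fin.cases ⟨hab, le_rfl⟩ fun _ => ⟨le_rfl, hab⟩, ?_⟩
  simp [Fin.prod_univ_succ, mul_comm]

/-- for a < 0 < b with |b| ≤ |a| and n ≥ 1:
if (λ > 0 and n even) or (λ < 0 and n odd), then
min{λ·p : p ∈ P_n(a,b)} = λ·aⁿ⁻¹·b and max{λ·p : p ∈ P_n(a,b)} = λ·aⁿ;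
if (λ > 0 and n odd) or (λ < 0 and n even), then
min{λ·p : p ∈ P_n(a,b)} = λ·aⁿ and max{λ·p : p ∈ P_n(a,b)} = λ·aⁿ⁻¹·b. -/
theorem scaled_intervalPow_mixed_a (a b : ℝ) (ha : a < 0) (hb : 0 < b)
    (habs : |b| ≤ |a|) (n : ℕ) (hn : 1 ≤ n) (lam : ℝ) :
    ((lam > 0 ∧ Even n) ∨ (lam < 0 ∧ Odd n) →
      sInf ((fun p => lam * p) '' intervalPow a b n) = lam * (a ^ (n - 1) * b) ∧
      sSup ((fun p => lam * p) '' intervalPow a b n) = lam * a ^ n) ∧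
    ((lam > 0 ∧ Odd n) ∨ (lam < 0 ∧ Even n) →
      sInf ((fun p => lam * p) '' intervalPow a b n) = lam * a ^ n ∧
      sSup ((fun p => lam * p) '' intervalPow a b n) = lam * (a ^ (n - 1) * b)) := by
  have hab : a ≤ b := (ha.trans hb).le
  have hmemA : lam * a ^ n ∈ (fun p => lam * p) '' intervalPow a b n :=
    ⟨_, pow_mem_intervalPow hab n, rfl⟩
  have hmemB : lam * (a ^ (n - 1) * b) ∈ (fun p => lam * p) '' intervalPow a b n :=
    ⟨_, pow_pred_mul_mem_intervalPow hab hn, rfl⟩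
  have hB : lam * (a ^ (n - 1) * b) = lam * a ^ n * (b / a) := by
    rw [← pow_sub_one_mul (Nat.one_le_iff_ne_zero.1 hn) a]
    field_simp [ha.ne]
  have hform : ∀ y ∈ (fun p => lam * p) '' intervalPow a b n,
      ∃ q ∈ Set.Icc (b / a) 1, y = lam * a ^ n * q := by
    rintro _ ⟨p, hp, rfl⟩
    obtain ⟨q, hq, rfl⟩ := exists_eq_pow_mul_of_mem_intervalPow ha hb habs hp
    exact ⟨q, hq, (mul_assoc _ _ _).symm⟩
  constructor
  · intro h
    have hs : 0 < lam * a ^ n := by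
      rcases h with ⟨hl, he⟩ | ⟨hl, ho⟩
      · exact mul_pos hl (he.pow_pos ha.ne)
      · exact mul_pos_of_neg_of_neg hl (ho.pow_neg ha)
    refine ⟨IsLeast.csInf_eq ⟨hmemB, fun y hy => ?_⟩, IsGreatest.csSup_eq ⟨hmemA, fun y hy => ?_⟩⟩
    · obtain ⟨q, hq, rfl⟩ := hform y hy
      rw [hB]
      exact mul_le_mul_of_nonneg_left hq.1 hs.le
    · obtain ⟨q, hq, rfl⟩ := hform y hy
      exact mul_le_of_le_one_right hs.le hq.2
  · intro h
    have hs : lam * a ^ n < 0 := by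
      rcases h with ⟨hl, ho⟩ | ⟨hl, he⟩
      · exact mul_neg_of_pos_of_neg hl (ho.pow_neg ha)
      · exact mul_neg_of_neg_of_pos hl (he.pow_pos ha.ne)
    refine ⟨IsLeast.csInf_eq ⟨hmemA, fun y hy => ?_⟩, IsGreatest.csSup_eq ⟨hmemB, fun y hy => ?_⟩⟩
    · obtain ⟨q, hq, rfl⟩ := hform y hy
      nlinarith [hq.2]
    · obtain ⟨q, hq, rfl⟩ := hform y hy
      rw [hB]
      exact mul_le_mul_of_nonpos_left hq.1 hs.le
end
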